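/- (Matrix Bailey lemma / discrete star-triangle relation) Let p, q be complex numbers with |p| < 1, |q| < 1, and let t, a, k, b, c be nonzero complex numbers satisfying the balancing condition k·b·c = q·a·t, generic in the sense that every theta factor appearing in a denominator below is nonzero. Then for all integers N, m with 0 ≤ m ≤ N: ∑_{n=m}^{N} M_{Nn}(a,k) · D_n(a;b,c) · M_{nm}(t,a) = D_N(k; qt/c, qt/b) · M_{Nm}(t,k) · D_m(t;b,c). -/

import Mathlib

open Complex Real Filter Topology

/-- The infinite q-Pochhammer symbol (z;q)_inf. -/
noncomputable def qpoch (z q : ℂ) : ℂ := ∏' j : ℕ, (1 - z * q ^ j)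

/-- The elliptic gamma function Γ(z;p,q). -/
noncomputable def egamma (z p q : ℂ) : ℂ :=
  ∏' jk : ℕ × ℕ, (1 - z⁻¹ * p ^ (jk.1 + 1) * q ^ (jk.2 + 1)) / (1 - z * p ^ jk.1 * q ^ jk.2)

/-- The short Jacobi theta function θ(z;p) (base first argument). -/
noncomputable def theta (p z : ℂ) : ℂ := qpoch z p * qpoch (p * z⁻¹) p

/-- The elliptic Pochhammer symbol θ(z;p)_n for n ≥ 0 (with shift base q). -/
noncomputable def thetaPochN (p q z : ℂ) (n : ℕ) : ℂ := ∏ j ∈ Finset.range n, theta p (z * q ^ j)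

/-- The Bailey matrix M_{Nm}(a,k). -/
noncomputable def Mmat (p q a k : ℂ) (N m : ℕ) : ℂ :=
  thetaPochN p q k (N + m) * thetaPochN p q (k / a) (N - m) /
      (thetaPochN p q (q * a) (N + m) * thetaPochN p q q (N - m)) *
    (theta p (a * q ^ (2 * m)) / theta p a) * a ^ (N - m)

/-- The diagonal matrix entries D_m(a;b,c). -/
noncomputable def Dmat (p q a b c : ℂ) (m : ℕ) : ℂ :=
  thetaPochN p q b m * thetaPochN p q c m /
      (thetaPochN p q (q * a / b) m * thetaPochN p q (q * a / c) m) *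
    (q * a / (b * c)) ^ m

/-!
The finite `q`-binomial theorem, in the symmetric range `-n, …, n`, converges to the Jacobi triple
product, which identifies `θ` with a theta series. The double series of a product of two thetas can
be summed along the parity classes of lattice points, so `(x, y) ↦ y θ(xy) θ(x/y)` is an alternating
form of rank two; its Plücker relation is the Weierstrass addition formula.

The addition formula gives a three-term relation in `N` for the kernel
`(k)_{N+j} (k/a)_{N-j} / ((a)_{N+j+1} (q)_{N-j})`, with the shift `(a, k) ↦ (aq², kq)`; a second use
of it shows that the product side of the Frenkel–Turaev summation satisfies the same recurrence,
which proves that summation by induction on `N`. For `m = 0` the matrix identity is the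
Frenkel–Turaev summation with fourth parameter `d = a/t`, and replacing `(t, a, k, b, c)` by
`(tq^{2m}, aq^{2m}, kq^{2m}, bq^m, cq^m)` yields the identity for general `m`.
-/

section GaussBinom

variable {R : Type*} [CommRing R]

/-- The finite `q`-Pochhammer symbol `(z;q)_n`. -/
def qPochN (z q : R) (n : ℕ) : R := ∏ j ∈ Finset.range n, (1 - z * q ^ j)

/-- The Gaussian binomial coefficient, defined by the `q`-Pascal rule so that it makes sense
without dividing. -/
def gaussBinom (q : R) : ℕ → ℕ → R
  | _, 0 => 1
  | 0, _ + 1 => 0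
  | n + 1, k + 1 => gaussBinom q n k + q ^ (k + 1) * gaussBinom q n (k + 1)

lemma qPochN_zero (z q : R) : qPochN z q 0 = 1 := Finset.prod_range_zero _

lemma qPochN_succ (z q : R) (n : ℕ) : qPochN z q (n + 1) = qPochN z q n * (1 - z * q ^ n) :=
  Finset.prod_range_succ _ _

lemma qPochN_succ' (z q : R) (n : ℕ) : qPochN z q (n + 1) = (1 - z) * qPochN (z * q) q n := by
  simp only [qPochN, Finset.prod_range_succ', pow_zero, mul_one, mul_comm _ (1 - z), mul_assoc,
    pow_succ']

lemma qPochN_add (z q : R) (m n : ℕ) :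
    qPochN z q (m + n) = qPochN z q m * qPochN (z * q ^ m) q n := by
  simp only [qPochN, Finset.prod_range_add, pow_add, mul_assoc]

lemma gaussBinom_zero_right (q : R) (n : ℕ) : gaussBinom q n 0 = 1 := by
  cases n <;> rfl

lemma gaussBinom_eq_zero_of_lt (q : R) {n k : ℕ} (h : n < k) : gaussBinom q n k = 0 := by
  induction n generalizing k with
  | zero => obtain ⟨k, rfl⟩ := Nat.exists_eq_succ_of_ne_zero h.ne'; rfl
  | succ n ih =>
    obtain ⟨k, rfl⟩ := Nat.exists_eq_succ_of_ne_zero (Nat.ne_zero_of_lt h)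
    simp only [gaussBinom, ih (Nat.lt_of_succ_lt_succ h), ih (Nat.lt_of_succ_lt h), mul_zero,
      add_zero]

lemma gaussBinom_mul_qPochN (q : R) (k d : ℕ) :
    gaussBinom q (k + d) k * (qPochN q q k * qPochN q q d) = qPochN q q (k + d) := by
  induction hn : k + d generalizing k d with
  | zero =>
    obtain ⟨rfl, rfl⟩ := Nat.add_eq_zero_iff.mp hn
    simp [gaussBinom, qPochN]
  | succ n ih =>
    match k, d with
    | 0, d =>
      obtain rfl : d = n + 1 := by lia
      simp [gaussBinom, qPochN_zero]
    | k + 1, 0 =>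
      obtain rfl : k = n := by lia
      have h := ih k 0 rfl
      simp only [gaussBinom, gaussBinom_eq_zero_of_lt q k.lt_succ_self, qPochN_succ,
        qPochN_zero] at h ⊢
      linear_combination (1 - q * q ^ k) * h
    | k + 1, d + 1 =>
      have h₁ := ih k (d + 1) (by lia)
      have h₂ := ih (k + 1) d (by lia)
      obtain rfl : n = k + d + 1 := by lia
      simp only [gaussBinom, qPochN_succ q q (k + d + 1), qPochN_succ q q k,
        qPochN_succ q q d] at h₁ h₂ ⊢
      linear_combination (1 - q * q ^ k) * h₁ + q ^ (k + 1) * (1 - q * q ^ d) * h₂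

lemma qPochN_neg_eq_sum_gaussBinom (x q : R) (n : ℕ) :
    qPochN (-x) q n
      = ∑ k ∈ Finset.range (n + 1), gaussBinom q n k * (q ^ k.choose 2 * x ^ k) := by
  induction n generalizing x with
  | zero => simp [gaussBinom, qPochN]
  | succ n ih =>
    let f (k : ℕ) : R := gaussBinom q n k * (q ^ k.choose 2 * (x * q) ^ k)
    have pascal (k : ℕ) : gaussBinom q (n + 1) (k + 1) * (q ^ (k + 1).choose 2 * x ^ (k + 1))
        = f (k + 1) + x * f k := by
      have h : (k + 1).choose 2 = k + k.choose 2 := by simp [Nat.choose_succ_succ' k 1]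
      simp only [f, gaussBinom, h]
      ring
    have hf : ∑ k ∈ Finset.range (n + 1), f (k + 1) + f 0 = ∑ k ∈ Finset.range (n + 1), f k := by
      rw [← Finset.sum_range_succ', Finset.sum_range_succ _ (n + 1), add_eq_left]
      simp [f, gaussBinom_eq_zero_of_lt]
    calc qPochN (-x) q (n + 1) = (1 + x) * ∑ k ∈ Finset.range (n + 1), f k := by
          rw [qPochN_succ', neg_mul, ih, sub_neg_eq_add]
      _ = ∑ k ∈ Finset.range (n + 1), (f (k + 1) + x * f k) + f 0 := by
          rw [Finset.sum_add_distrib, ← Finset.mul_sum, add_right_comm, hf, add_mul, one_mul]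
      _ = _ := by
          rw [Finset.sum_range_succ' _ (n + 1)]
          simp only [pascal, f, gaussBinom_zero_right, Nat.choose_zero_succ, pow_zero]

end GaussBinom

lemma two_mul_choose_two_add (k : ℕ) : 2 * k.choose 2 + k = k ^ 2 := by
  induction k with
  | zero => rfl
  | succ k ih =>
    rw [Nat.choose_succ_succ' k 1, Nat.choose_one_right]
    linarith

section FiniteTriple

variable {K : Type*} [Field K] {r w : K}

lemma qPochN_div_pow_mul (hr : r ≠ 0) (hw : w ≠ 0) (N : ℕ) :
    qPochN (-(r * w / (r ^ 2) ^ N)) (r ^ 2) N * r ^ (N ^ 2)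
      = w ^ N * qPochN (-(r * w⁻¹)) (r ^ 2) N := by
  induction N with
  | zero => simp [qPochN]
  | succ N ih =>
    have hshift : -(r * w / (r ^ 2) ^ (N + 1)) * r ^ 2 = -(r * w / (r ^ 2) ^ N) := by
      rw [pow_succ]
      field_simp
    rw [qPochN_succ', qPochN_succ, hshift]
    calc _ = (1 + r * w / (r ^ 2) ^ (N + 1)) * r ^ (2 * N + 1) *
          (qPochN (-(r * w / (r ^ 2) ^ N)) (r ^ 2) N * r ^ (N ^ 2)) := by ring
      _ = _ := by
        rw [ih]
        field_simp
        ring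

lemma zpow_sub_sq_mul (hr : r ≠ 0) (k N : ℕ) :
    r ^ ((k - N : ℤ) ^ 2) * r ^ (2 * N * k) = r ^ (2 * k.choose 2) * r ^ k * r ^ N ^ 2 := by
  simp only [← pow_add, two_mul_choose_two_add]
  simp only [← zpow_natCast, ← zpow_add₀ hr]
  congr 1
  push_cast
  ring

lemma qPochN_mul_qPochN_inv_eq_sum_gaussBinom (hr : r ≠ 0) (hw : w ≠ 0) (N : ℕ) :
    qPochN (-(r * w)) (r ^ 2) N * qPochN (-(r * w⁻¹)) (r ^ 2) N
      = ∑ i ∈ Finset.Icc (-N : ℤ) N,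
          gaussBinom (r ^ 2) (2 * N) (i + N).toNat * (r ^ (i ^ 2) * w ^ i) := by
  have hterm (i : ℤ) (hi : i ∈ Finset.Icc (-N : ℤ) N) :
      (r ^ 2) ^ (i + N).toNat.choose 2 * (r * w / (r ^ 2) ^ N) ^ (i + N).toNat * r ^ (N ^ 2)
        = w ^ N * (r ^ (i ^ 2) * w ^ i) := by
    obtain ⟨k, hk⟩ : ∃ k : ℕ, i + N = k := ⟨(i + N).toNat, by grind⟩
    obtain rfl : i = k - N := by lia
    simp only [sub_add_cancel, Int.toNat_natCast, zpow_sub₀ hw, zpow_natCast, div_pow, ← pow_mul]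
    field_simp
    linear_combination -w ^ k * zpow_sub_sq_mul hr k N
  have hbij : ∑ k ∈ Finset.range (2 * N + 1), gaussBinom (r ^ 2) (2 * N) k *
        ((r ^ 2) ^ k.choose 2 * (r * w / (r ^ 2) ^ N) ^ k)
      = ∑ i ∈ Finset.Icc (-N : ℤ) N, gaussBinom (r ^ 2) (2 * N) (i + N).toNat *
        ((r ^ 2) ^ (i + N).toNat.choose 2 * (r * w / (r ^ 2) ^ N) ^ (i + N).toNat) :=
    Finset.sum_nbij' (fun k ↦ (k : ℤ) - N) (fun i ↦ (i + N).toNat) (by grind) (by grind)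
      (by grind) (by grind) (by simp)
  have hsplit : qPochN (-(r * w / (r ^ 2) ^ N)) (r ^ 2) (2 * N)
      = qPochN (-(r * w / (r ^ 2) ^ N)) (r ^ 2) N * qPochN (-(r * w)) (r ^ 2) N := by
    rw [two_mul, qPochN_add, neg_mul, div_mul_cancel₀ _ (by positivity)]
  refine mul_left_cancel₀ (pow_ne_zero N hw) ?_
  calc _ = qPochN (-(r * w / (r ^ 2) ^ N)) (r ^ 2) (2 * N) * r ^ (N ^ 2) := by
        rw [hsplit]
        linear_combination -qPochN (-(r * w)) (r ^ 2) N * qPochN_div_pow_mul hr hw N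
    _ = _ := by
        rw [qPochN_neg_eq_sum_gaussBinom, hbij, Finset.sum_mul, Finset.mul_sum]
        refine Finset.sum_congr rfl fun i hi ↦ ?_
        linear_combination gaussBinom (r ^ 2) (2 * N) (i + N).toNat * hterm i hi

end FiniteTriple

section JacobiTriple

variable {q : ℂ}

lemma summable_norm_neg_mul_pow (hq : ‖q‖ < 1) (z : ℂ) : Summable fun j : ℕ ↦ ‖-(z * q ^ j)‖ := by
  simpa using (summable_geometric_of_lt_one (norm_nonneg q) hq).mul_left ‖z‖

lemma tendsto_qPochN (hq : ‖q‖ < 1) (z : ℂ) : Tendsto (qPochN z q) atTop (𝓝 (qpoch z q)) := by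
  have h := (multipliable_one_add_of_summable (summable_norm_neg_mul_pow hq z)).hasProd
  simp only [← sub_eq_add_neg] at h
  exact h.tendsto_prod_nat

lemma one_sub_mul_pow_ne_zero (hq : ‖q‖ < 1) (j : ℕ) : 1 - q * q ^ j ≠ 0 := by
  rw [← pow_succ', sub_ne_zero]
  intro h
  have hlt := pow_lt_one₀ (norm_nonneg q) hq j.succ_ne_zero
  rw [← norm_pow, ← h, norm_one] at hlt
  exact hlt.false

lemma qPochN_self_ne_zero (hq : ‖q‖ < 1) (n : ℕ) : qPochN q q n ≠ 0 :=
  Finset.prod_ne_zero_iff.mpr fun j _ ↦ one_sub_mul_pow_ne_zero hq j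

lemma qpoch_self_ne_zero (hq : ‖q‖ < 1) : qpoch q q ≠ 0 := by
  have h := tprod_one_add_ne_zero_of_summable
    (fun j ↦ by simpa only [← sub_eq_add_neg] using one_sub_mul_pow_ne_zero hq j)
    (summable_norm_neg_mul_pow hq q)
  simp only [← sub_eq_add_neg] at h
  exact h

lemma gaussBinom_add_eq_div (hq : ‖q‖ < 1) (k d : ℕ) :
    gaussBinom q (k + d) k = qPochN q q (k + d) / (qPochN q q k * qPochN q q d) := by
  rw [eq_div_iff (mul_ne_zero (qPochN_self_ne_zero hq k) (qPochN_self_ne_zero hq d)),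
    gaussBinom_mul_qPochN]

lemma exists_norm_gaussBinom_le (hq : ‖q‖ < 1) : ∃ C, ∀ n k, ‖gaussBinom q n k‖ ≤ C := by
  obtain ⟨A, hA⟩ := (tendsto_qPochN hq q).norm.bddAbove_range
  obtain ⟨B, hB⟩ := ((tendsto_qPochN hq q).inv₀ (qpoch_self_ne_zero hq)).norm.bddAbove_range
  have hA' (n : ℕ) : ‖qPochN q q n‖ ≤ A := hA ⟨n, rfl⟩
  have hB' (n : ℕ) : ‖(qPochN q q n)⁻¹‖ ≤ B := hB ⟨n, rfl⟩
  have hA₀ : 0 ≤ A := (norm_nonneg _).trans (hA' 0)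
  have hB₀ : 0 ≤ B := (norm_nonneg _).trans (hB' 0)
  refine ⟨A * (B * B), fun n k ↦ ?_⟩
  obtain hnk | hkn := lt_or_ge n k
  · rw [gaussBinom_eq_zero_of_lt q hnk, norm_zero]
    positivity
  · obtain ⟨d, rfl⟩ := Nat.exists_eq_add_of_le hkn
    rw [gaussBinom_add_eq_div hq, div_eq_mul_inv, mul_inv, norm_mul, norm_mul]
    gcongr
    exacts [hA' _, hB' _, hB' _]

lemma tendsto_gaussBinom_two_mul (hq : ‖q‖ < 1) (i : ℤ) :
    Tendsto (fun N : ℕ ↦ gaussBinom q (2 * N) (i + N).toNat) atTop (𝓝 (qpoch q q)⁻¹) := by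
  have hQ := tendsto_qPochN hq q
  have hQ₀ := qpoch_self_ne_zero hq
  have htwo : Tendsto (fun N : ℕ ↦ 2 * N) atTop atTop :=
    tendsto_id.const_mul_atTop' two_pos
  have hadd : Tendsto (fun N : ℕ ↦ (i + N).toNat) atTop atTop :=
    tendsto_atTop_atTop.mpr fun b ↦ ⟨b + i.natAbs, fun N hN ↦ by lia⟩
  have hsub : Tendsto (fun N : ℕ ↦ (N - i).toNat) atTop atTop :=
    tendsto_atTop_atTop.mpr fun b ↦ ⟨b + i.natAbs, fun N hN ↦ by lia⟩
  have hlim := (hQ.comp htwo).div ((hQ.comp hadd).mul (hQ.comp hsub)) (mul_ne_zero hQ₀ hQ₀)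
  rw [div_mul_cancel_left₀ hQ₀] at hlim
  refine hlim.congr' ?_
  filter_upwards [eventually_ge_atTop i.natAbs] with N hN
  have hsplit : 2 * N = (i + N).toNat + (N - i).toNat := by lia
  simp only [Function.comp_apply, Pi.div_apply, hsplit, gaussBinom_add_eq_div hq]

lemma tendsto_sum_gaussBinom_mul (hq : ‖q‖ < 1) {f : ℤ → ℂ} (hf : Summable fun i ↦ ‖f i‖) :
    Tendsto (fun N : ℕ ↦ ∑ i ∈ Finset.Icc (-N : ℤ) N, gaussBinom q (2 * N) (i + N).toNat * f i)
      atTop (𝓝 ((qpoch q q)⁻¹ * ∑' i, f i)) := by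
  obtain ⟨C, hC⟩ := exists_norm_gaussBinom_le hq
  rw [← tsum_mul_left]
  refine (tendsto_tsum_of_dominated_convergence (hf.mul_left C) (fun i ↦ ?_)
    (.of_forall fun N i ↦ ?_)).congr fun N ↦ (sum_eq_tsum_indicator _ _).symm
  · refine ((tendsto_gaussBinom_two_mul hq i).mul_const (f i)).congr' ?_
    filter_upwards [eventually_ge_atTop i.natAbs] with N hN
    rw [Set.indicator_of_mem (Finset.mem_Icc.mpr (by lia))]
  · refine (norm_indicator_le_norm_self _ _).trans ?_
    rw [norm_mul]
    gcongr
    exact hC _ _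

lemma jacobiTheta₂_term_eq_zpow (n : ℤ) (z τ : ℂ) :
    jacobiTheta₂_term n z τ = cexp (π * I * τ) ^ (n ^ 2) * cexp (2 * π * I * z) ^ n := by
  rw [jacobiTheta₂_term, ← Complex.exp_int_mul, ← Complex.exp_int_mul, ← Complex.exp_add]
  push_cast
  ring_nf

lemma jacobiTheta₂_eq_qpoch_mul_theta {τ : ℂ} (hτ : 0 < τ.im) (z : ℂ) :
    jacobiTheta₂ z τ = qpoch (cexp (2 * π * I * τ)) (cexp (2 * π * I * τ)) *
      theta (cexp (2 * π * I * τ)) (-(cexp (π * I * τ) * cexp (2 * π * I * z))) := by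
  set r := cexp (π * I * τ)
  set w := cexp (2 * π * I * z)
  have hr : r ≠ 0 := exp_ne_zero _
  have hw : w ≠ 0 := exp_ne_zero _
  have hr₂ : cexp (2 * π * I * τ) = r ^ 2 := by
    rw [← Complex.exp_nat_mul]
    push_cast
    ring_nf
  have hr₁ : ‖r ^ 2‖ < 1 := by
    rw [← hr₂]
    exact UpperHalfPlane.norm_exp_two_pi_I_lt_one ⟨τ, hτ⟩
  have hsum : Summable fun n : ℤ ↦ ‖r ^ (n ^ 2) * w ^ n‖ := by
    simpa only [jacobiTheta₂_term_eq_zpow] using ((summable_jacobiTheta₂_term_iff z τ).mpr hτ).norm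
  have hprod := (tendsto_qPochN hr₁ (-(r * w))).mul (tendsto_qPochN hr₁ (-(r * w⁻¹)))
  simp only [qPochN_mul_qPochN_inv_eq_sum_gaussBinom hr hw] at hprod
  have hlim := tendsto_nhds_unique hprod (tendsto_sum_gaussBinom_mul hr₁ hsum)
  have hinv : r ^ 2 * (-(r * w))⁻¹ = -(r * w⁻¹) := by field_simp
  rw [hr₂, theta, hinv, hlim, mul_inv_cancel_left₀ (qpoch_self_ne_zero hr₁), jacobiTheta₂]
  simp only [jacobiTheta₂_term_eq_zpow, r, w]

end JacobiTriple

section Addition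

/-- Two integers of equal parity are `s + d, s - d`, and two of opposite parity are
`s + d + 1, s - d`, for unique `s` and `d`. This splits the double series of a product of two
theta functions. -/
def paritySplit : (ℤ × ℤ) ⊕ (ℤ × ℤ) ≃ ℤ × ℤ where
  toFun := Sum.elim (fun x ↦ (x.1 + x.2, x.1 - x.2)) (fun x ↦ (x.1 + x.2 + 1, x.1 - x.2))
  invFun x := if Even (x.1 + x.2) then .inl ((x.1 + x.2) / 2, (x.1 - x.2) / 2)
    else .inr ((x.1 + x.2) / 2, (x.1 - x.2) / 2)
  left_inv := by
    rintro (⟨s, d⟩ | ⟨s, d⟩) <;> grind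
  right_inv := by
    rintro ⟨m, n⟩
    grind

lemma jacobiTheta₂_add_mul_jacobiTheta₂_sub {τ : ℂ} (hτ : 0 < τ.im) (x y : ℂ) :
    jacobiTheta₂ (x + y) τ * jacobiTheta₂ (x - y) τ
      = jacobiTheta₂ (2 * x) (2 * τ) * jacobiTheta₂ (2 * y) (2 * τ)
        + cexp (2 * π * I * (x + y) + π * I * τ) *
          (jacobiTheta₂ (2 * x + τ) (2 * τ) * jacobiTheta₂ (2 * y + τ) (2 * τ)) := by
  have hτ₂ : 0 < (2 * τ).im := by simpa using hτ
  have hnorm {τ' : ℂ} (hτ' : 0 < τ'.im) (z : ℂ) : Summable fun n ↦ ‖jacobiTheta₂_term n z τ'‖ :=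
    ((summable_jacobiTheta₂_term_iff z τ').mpr hτ').norm
  have heven (s d : ℤ) : jacobiTheta₂_term (s + d) (x + y) τ * jacobiTheta₂_term (s - d) (x - y) τ
      = jacobiTheta₂_term s (2 * x) (2 * τ) * jacobiTheta₂_term d (2 * y) (2 * τ) := by
    simp only [jacobiTheta₂_term, ← Complex.exp_add]
    push_cast
    ring_nf
  have hodd (s d : ℤ) :
      jacobiTheta₂_term (s + d + 1) (x + y) τ * jacobiTheta₂_term (s - d) (x - y) τ
        = cexp (2 * π * I * (x + y) + π * I * τ) *
          (jacobiTheta₂_term s (2 * x + τ) (2 * τ) * jacobiTheta₂_term d (2 * y + τ) (2 * τ)) := by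
    simp only [jacobiTheta₂_term, ← Complex.exp_add]
    push_cast
    ring_nf
  have hsplit := paritySplit.summable_iff.mpr
    (summable_mul_of_summable_norm (hnorm hτ (x + y)) (hnorm hτ (x - y)))
  simp only [jacobiTheta₂]
  rw [tsum_mul_tsum_of_summable_norm (hnorm hτ _) (hnorm hτ _),
    tsum_mul_tsum_of_summable_norm (hnorm hτ₂ _) (hnorm hτ₂ _),
    tsum_mul_tsum_of_summable_norm (hnorm hτ₂ _) (hnorm hτ₂ _), ← tsum_mul_left]
  refine (paritySplit.tsum_eq _).symm.trans <|
    (Summable.tsum_sum (hsplit.comp_injective Sum.inl_injective)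
      (hsplit.comp_injective Sum.inr_injective)).trans ?_
  congr! 3 with n n
  · exact heven n.1 n.2
  · exact hodd n.1 n.2

lemma qpoch_mul_theta_cexp {τ : ℂ} (hτ : 0 < τ.im) (ξ : ℂ) :
    qpoch (cexp (2 * π * I * τ)) (cexp (2 * π * I * τ)) *
        theta (cexp (2 * π * I * τ)) (cexp (2 * π * I * ξ))
      = jacobiTheta₂ (ξ + 1 / 2 - τ / 2) τ := by
  have harg : -(cexp (π * I * τ) * cexp (2 * π * I * (ξ + 1 / 2 - τ / 2)))
      = cexp (2 * π * I * ξ) := by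
    rw [← Complex.exp_add, ← Complex.exp_add_pi_mul_I, ← Complex.exp_periodic.sub_eq]
    ring_nf
  rw [jacobiTheta₂_eq_qpoch_mul_theta hτ, harg]

lemma qpoch_sq_mul_theta_mul_theta_cexp {τ : ℂ} (hτ : 0 < τ.im) (ξ η : ℂ) :
    qpoch (cexp (2 * π * I * τ)) (cexp (2 * π * I * τ)) ^ 2 *
        (theta (cexp (2 * π * I * τ)) (cexp (2 * π * I * (ξ + η))) *
          theta (cexp (2 * π * I * τ)) (cexp (2 * π * I * (ξ - η))))
      = cexp (2 * π * I * ξ) *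
          (cexp (2 * π * I * ξ) * jacobiTheta₂ (2 * ξ + τ) (2 * τ) * jacobiTheta₂ (2 * η) (2 * τ)
            - jacobiTheta₂ (2 * ξ) (2 * τ) *
              (cexp (2 * π * I * η) * jacobiTheta₂ (2 * η + τ) (2 * τ))) := by
  have hshift₀ : jacobiTheta₂ (2 * (ξ + 1 / 2 - τ / 2)) (2 * τ)
      = cexp (2 * π * I * ξ) ^ 2 * jacobiTheta₂ (2 * ξ + τ) (2 * τ) := by
    have h₁ := jacobiTheta₂_add_left (2 * ξ - τ) (2 * τ)
    have h₂ := jacobiTheta₂_add_left' (2 * ξ - τ) (2 * τ)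
    rw [show 2 * (ξ + 1 / 2 - τ / 2) = 2 * ξ - τ + 1 by ring, h₁,
      show 2 * ξ + τ = 2 * ξ - τ + 2 * τ by ring, h₂, ← mul_assoc, ← Complex.exp_nat_mul,
      ← Complex.exp_add]
    push_cast
    ring_nf
    simp
  have hshift₁ : jacobiTheta₂ (2 * (ξ + 1 / 2 - τ / 2) + τ) (2 * τ)
      = jacobiTheta₂ (2 * ξ) (2 * τ) := by
    rw [← jacobiTheta₂_add_left (2 * ξ)]
    ring_nf
  have hexp : cexp (2 * π * I * (ξ + 1 / 2 - τ / 2 + η) + π * I * τ)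
      = -(cexp (2 * π * I * ξ) * cexp (2 * π * I * η)) := by
    rw [← Complex.exp_add, ← Complex.exp_add_pi_mul_I]
    ring_nf
  have hadd := jacobiTheta₂_add_mul_jacobiTheta₂_sub hτ (ξ + 1 / 2 - τ / 2) η
  rw [hshift₀, hshift₁, hexp, show ξ + 1 / 2 - τ / 2 + η = ξ + η + 1 / 2 - τ / 2 by ring,
    show ξ + 1 / 2 - τ / 2 - η = ξ - η + 1 / 2 - τ / 2 by ring, ← qpoch_mul_theta_cexp hτ,
    ← qpoch_mul_theta_cexp hτ] at hadd
  linear_combination hadd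

lemma theta_zero_left (z : ℂ) : theta 0 z = 1 - z := by
  have h (w : ℂ) : qpoch w 0 = 1 - w := by
    rw [qpoch, tprod_eq_mulSingle 0 fun j hj ↦ by simp [hj]]
    simp
  simp [theta, h]

lemma exists_theta_mul_theta_div_eq {p : ℂ} (hp : ‖p‖ < 1) :
    ∃ f g : ℂ → ℂ, ∀ x y, x ≠ 0 → y ≠ 0 →
      theta p (x * y) * theta p (x / y) = x * (f x * g y - g x * f y) := by
  obtain rfl | hp₀ := eq_or_ne p 0
  · refine ⟨fun x ↦ x + 1 / x, fun _ ↦ 1, fun x y hx hy ↦ ?_⟩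
    rw [theta_zero_left, theta_zero_left]
    field_simp
    ring
  set L := Function.Periodic.invQParam 1
  have hL {x : ℂ} (hx : x ≠ 0) : cexp (2 * π * I * L x) = x := by
    simpa [Function.Periodic.qParam] using Function.Periodic.qParam_right_inv one_ne_zero hx
  have hτ : 0 < (L p).im := Function.Periodic.im_invQParam_pos_of_norm_lt_one one_pos hp hp₀
  refine ⟨fun x ↦ x * jacobiTheta₂ (2 * L x + L p) (2 * L p) / qpoch p p ^ 2,
    fun x ↦ jacobiTheta₂ (2 * L x) (2 * L p), fun x y hx hy ↦ ?_⟩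
  have h := qpoch_sq_mul_theta_mul_theta_cexp hτ (L x) (L y)
  have hQ := qpoch_self_ne_zero hp
  simp only [mul_add, mul_sub, Complex.exp_add, Complex.exp_sub, hL hp₀, hL hx, hL hy] at h
  field_simp
  linear_combination h

lemma theta_weierstrass_addition {p x y u v : ℂ} (hp : ‖p‖ < 1) (hx : x ≠ 0) (hy : y ≠ 0)
    (hu : u ≠ 0) (hv : v ≠ 0) :
    theta p (x * y) * theta p (x / y) * (theta p (u * v) * theta p (u / v))
        - theta p (x * v) * theta p (x / v) * (theta p (u * y) * theta p (u / y))
      = u / y * (theta p (y * v) * theta p (y / v) * (theta p (x * u) * theta p (x / u))) := by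
  obtain ⟨f, g, h⟩ := exists_theta_mul_theta_div_eq hp
  rw [h x y hx hy, h u v hu hv, h x v hx hv, h u y hu hy, h y v hy hv, h x u hx hu]
  field_simp
  ring

lemma theta_addition {p b c d e : ℂ} (hp : ‖p‖ < 1) (hb : b ≠ 0) (hc : c ≠ 0) (hd : d ≠ 0)
    (he : e ≠ 0) :
    theta p (b * c * d * e) * theta p (b * e) * theta p (c * e) * theta p (d * e)
        - theta p e * theta p (b * c * e) * theta p (b * d * e) * theta p (c * d * e)
      = e * theta p b * theta p c * theta p d * theta p (b * c * d * e ^ 2) := by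
  obtain ⟨v, hv⟩ := IsAlgClosed.exists_pow_nat_eq (c / b) two_pos
  have hv₀ : v ≠ 0 := by
    rintro rfl
    exact div_ne_zero hc hb (by simpa using hv.symm)
  obtain rfl : c = v ^ 2 * b := by rw [hv, div_mul_cancel₀ c hb]
  have h := theta_weierstrass_addition hp (x := v * b * d * e) (y := v * b) (u := v * b * e)
    (by positivity) (by positivity) (by positivity) hv₀
  field_simp at h ⊢
  linear_combination h

end Addition

section EllipticPochhammer

variable {p q z : ℂ}

lemma thetaPochN_zero (p q z : ℂ) : thetaPochN p q z 0 = 1 := Finset.prod_range_zero _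

lemma thetaPochN_succ (p q z : ℂ) (n : ℕ) :
    thetaPochN p q z (n + 1) = thetaPochN p q z n * theta p (z * q ^ n) :=
  Finset.prod_range_succ _ _

lemma thetaPochN_add (p q z : ℂ) (m n : ℕ) :
    thetaPochN p q z (m + n) = thetaPochN p q z m * thetaPochN p q (z * q ^ m) n := by
  simp only [thetaPochN, Finset.prod_range_add, pow_add, mul_assoc]

lemma thetaPochN_succ' (p q z : ℂ) (n : ℕ) :
    thetaPochN p q z (n + 1) = theta p z * thetaPochN p q (z * q) n := by
  rw [add_comm, thetaPochN_add, thetaPochN_succ, thetaPochN_zero, pow_zero, mul_one, one_mul,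
    pow_one]

lemma thetaPochN_ne_zero_iff {n : ℕ} :
    thetaPochN p q z n ≠ 0 ↔ ∀ j < n, theta p (z * q ^ j) ≠ 0 := by
  simp [thetaPochN, Finset.prod_ne_zero_iff]

lemma thetaPochN_mul_pow_ne_zero {i m n : ℕ} (h : thetaPochN p q z n ≠ 0) (him : i + m ≤ n) :
    thetaPochN p q (z * q ^ i) m ≠ 0 := by
  rw [thetaPochN_ne_zero_iff] at h ⊢
  intro j hj
  rw [mul_assoc, ← pow_add]
  exact h (i + j) (by lia)

lemma thetaPochN_ne_zero_of_le {m n : ℕ} (h : thetaPochN p q z n ≠ 0) (hmn : m ≤ n) :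
    thetaPochN p q z m ≠ 0 := by
  simpa using thetaPochN_mul_pow_ne_zero (i := 0) h (by lia)

lemma theta_pow_succ_ne_zero {j n : ℕ} (h : thetaPochN p q q n ≠ 0) (hj : j < n) :
    theta p (q ^ (j + 1)) ≠ 0 := by
  rw [pow_succ']
  exact thetaPochN_ne_zero_iff.mp h j hj

end EllipticPochhammer

section FrenkelTuraev

variable {p q a k : ℂ}

/-- The part of the Bailey matrix entry `M_{nj}(a,k)` that remains once the factors
`θ(aq^{2j};p)` and `a^{n-j}` are split off; this is the factor of the Frenkel–Turaev summand that
depends on the upper summation limit `n`. -/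
noncomputable def baileyKernel (p q a k : ℂ) (n j : ℕ) : ℂ :=
  thetaPochN p q k (n + j) * thetaPochN p q (k / a) (n - j) /
    (thetaPochN p q a (n + j + 1) * thetaPochN p q q (n - j))

/-- The quotient `(x)_j / (qa/x)_j` contributed to a well-poised summand with base parameter `a` by
each of its parameters `x`. -/
noncomputable def wellPoisedRatio (p q a x : ℂ) (j : ℕ) : ℂ :=
  thetaPochN p q x j / thetaPochN p q (q * a / x) j

/-- The very-well-poised factor of the Frenkel–Turaev summand,
`θ(aq^{2j};p) (a,b,c,d)_j / (q,qa/b,qa/c,qa/d)_j z^j`. -/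
noncomputable def wellPoisedTerm (p q a b c d z : ℂ) (j : ℕ) : ℂ :=
  theta p (a * q ^ (2 * j)) * (thetaPochN p q a j / thetaPochN p q q j) *
    wellPoisedRatio p q a b j * wellPoisedRatio p q a c j * wellPoisedRatio p q a d j * z ^ j

/-- The value of the Frenkel–Turaev sum, written in a form in which its numerator parameters other
than `k` are invariant under `(a,k,b,c,d) ↦ (aq²,kq,bq,cq,dq)`; under the balancing condition
`kbcd = qa²` they are `kb/a = qa/(cd)`, `kc/a = qa/(bd)` and `kd/a = qa/(bc)`. -/
noncomputable def frenkelTuraevProd (p q a k b c d : ℂ) (n : ℕ) : ℂ :=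
  thetaPochN p q k n / thetaPochN p q q n *
    (thetaPochN p q (k / a * b) n / thetaPochN p q (q * a / b) n) *
    (thetaPochN p q (k / a * c) n / thetaPochN p q (q * a / c) n) *
    (thetaPochN p q (k / a * d) n / thetaPochN p q (q * a / d) n)

lemma baileyKernel_add (p q a k : ℂ) (j e : ℕ) :
    baileyKernel p q a k (j + e) j = thetaPochN p q k (2 * j + e) * thetaPochN p q (k / a) e /
      (thetaPochN p q a (2 * j + e + 1) * thetaPochN p q q e) := by
  rw [baileyKernel, Nat.add_sub_cancel_left, add_right_comm, ← two_mul]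

lemma baileyKernel_self (p q a k : ℂ) (j : ℕ) :
    baileyKernel p q a k j j = thetaPochN p q k (2 * j) / thetaPochN p q a (2 * j + 1) := by
  simpa only [thetaPochN_zero, mul_one, add_zero] using baileyKernel_add p q a k j 0

lemma baileyKernel_add_succ (p q a k : ℂ) (j e : ℕ) :
    baileyKernel p q a k (j + e + 1) j = baileyKernel p q a k (j + e) j *
      (theta p (k * q ^ (2 * j + e)) * theta p (k / a * q ^ e) /
        (theta p (a * q ^ (2 * j + e + 1)) * theta p (q ^ (e + 1)))) := by
  rw [baileyKernel_add, add_assoc j, baileyKernel_add, ← add_assoc, thetaPochN_succ p q k,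
    thetaPochN_succ p q a (_ + 1), thetaPochN_succ p q q, thetaPochN_succ p q (k / a), ← pow_succ',
    div_mul_div_comm, mul_mul_mul_comm, mul_mul_mul_comm (thetaPochN p q a _)]

lemma baileyKernel_shift (hq : q ≠ 0) (p a k : ℂ) (j e : ℕ) :
    theta p k / (theta p a * theta p (a * q)) *
        baileyKernel p q (a * q ^ 2) (k * q) (j + e + 1) j
      = baileyKernel p q a k (j + e + 1) (j + 1) *
        (theta p (k / a / q) / (theta p (a * q ^ (2 * j + e + 3)) * theta p (q ^ (e + 1)))) := by
  have hdiv : k * q / (a * q ^ 2) = k / a / q := by field_simp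
  have hk : theta p k * thetaPochN p q (k * q) (2 * j + (e + 1))
      = thetaPochN p q k (2 * (j + 1) + e) := by
    rw [← thetaPochN_succ']
    congr 1
    lia
  have ha : theta p a * theta p (a * q) * thetaPochN p q (a * q ^ 2) (2 * j + (e + 1) + 1)
      = thetaPochN p q a (2 * (j + 1) + e + 1) * theta p (a * q ^ (2 * j + e + 3)) := by
    rw [show 2 * j + e + 3 = 2 * (j + 1) + e + 1 by ring, ← thetaPochN_succ, mul_assoc, pow_two,
      ← mul_assoc a, ← thetaPochN_succ', ← thetaPochN_succ']
    congr 1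
    lia
  have hg : thetaPochN p q (k / a / q) (e + 1)
      = theta p (k / a / q) * thetaPochN p q (k / a) e := by
    rw [thetaPochN_succ', div_mul_cancel₀ _ hq]
  rw [add_assoc j, baileyKernel_add, hdiv, show j + (e + 1) = j + 1 + e by ring, baileyKernel_add,
    div_mul_div_comm, div_mul_div_comm, ← mul_assoc, ← mul_assoc, hk, ha, hg,
    thetaPochN_succ p q q, ← pow_succ']
  ring

lemma baileyKernel_succ_self (p q a k : ℂ) (N : ℕ) :
    baileyKernel p q a k (N + 1) (N + 1)
      = theta p (k * q ^ (2 * N + 1)) *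
        (theta p k / (theta p a * theta p (a * q)) * baileyKernel p q (a * q ^ 2) (k * q) N N) := by
  rw [baileyKernel_self, baileyKernel_self, mul_add_one, thetaPochN_succ p q k,
    thetaPochN_succ' p q k, thetaPochN_succ' p q a,
    thetaPochN_succ' p q (a * q), mul_assoc a, ← pow_two]
  ring

lemma baileyKernel_succ_succ (hp : ‖p‖ < 1) (hq : q ≠ 0) (ha : a ≠ 0) (hk : k ≠ 0) {N j : ℕ}
    (hj : j < N) (hqN : thetaPochN p q q (N + 1) ≠ 0) (haN : thetaPochN p q a (2 * N + 3) ≠ 0) :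
    theta p (a * q ^ (N + 1)) * theta p (q ^ (N + 1)) * baileyKernel p q a k (N + 1) (j + 1)
      = theta p (k * q ^ N) * theta p (k / a * q ^ N) * baileyKernel p q a k N (j + 1)
        + theta p (k * q ^ (2 * N + 1)) * (q ^ (N - j) *
          (theta p (a * q ^ (j + 1)) * theta p (q ^ (j + 1))) *
          (theta p k / (theta p a * theta p (a * q)) *
            baileyKernel p q (a * q ^ 2) (k * q) N j)) := by
  obtain ⟨e, rfl⟩ := Nat.exists_eq_add_of_lt hj
  have hadd : theta p (a * q ^ (j + 1 + e + 1)) * theta p (q ^ (j + 1 + e + 1)) *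
        (theta p (k * q ^ (2 * (j + 1) + e)) * theta p (k / a * q ^ e))
      = theta p (k * q ^ (j + 1 + e)) * theta p (k / a * q ^ (j + 1 + e)) *
          (theta p (a * q ^ (2 * j + e + 3)) * theta p (q ^ (e + 1)))
        + theta p (k * q ^ (2 * (j + 1 + e) + 1)) * q ^ (e + 1) *
          (theta p (a * q ^ (j + 1)) * theta p (q ^ (j + 1))) * theta p (k / a / q) := by
    obtain ⟨d, hd, rfl⟩ : ∃ d, d ≠ 0 ∧ k = a * (q * d) :=
      ⟨k / a / q, by positivity, by field_simp⟩
    have h := theta_addition hp (b := a * q ^ (j + 1)) (c := q ^ (j + 1)) (e := q ^ (e + 1))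
      (by positivity) (by positivity) hd (by positivity)
    rw [mul_div_cancel_left₀ _ ha, mul_div_cancel_left₀ _ hq]
    ring_nf at h ⊢
    linear_combination h
  have hθa : theta p (a * q ^ (2 * j + e + 3)) ≠ 0 :=
    thetaPochN_ne_zero_iff.mp haN _ (by lia)
  have hθq : theta p (q ^ (e + 1)) ≠ 0 := theta_pow_succ_ne_zero hqN (by lia)
  rw [show j + e + 1 - j = e + 1 by lia, baileyKernel_shift hq,
    show j + e + 1 = j + 1 + e by ring, baileyKernel_add_succ,
    show 2 * (j + 1) + e + 1 = 2 * j + e + 3 by ring]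
  field_simp at hadd ⊢
  linear_combination baileyKernel p q a k (j + 1 + e) (j + 1) * hadd

lemma sum_baileyKernel_succ_mul (hp : ‖p‖ < 1) (hq : q ≠ 0) (ha : a ≠ 0) (hk : k ≠ 0) {N : ℕ}
    (hqN : thetaPochN p q q (N + 1) ≠ 0) (haN : thetaPochN p q a (2 * N + 3) ≠ 0) (u : ℕ → ℂ) :
    theta p (a * q ^ (N + 1)) * theta p (q ^ (N + 1)) *
        ∑ j ∈ Finset.range (N + 2), baileyKernel p q a k (N + 1) j * u j
      = theta p (k * q ^ N) * theta p (k / a * q ^ N) *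
          ∑ j ∈ Finset.range (N + 1), baileyKernel p q a k N j * u j
        + theta p (k * q ^ (2 * N + 1)) * (theta p k / (theta p a * theta p (a * q))) *
          ∑ j ∈ Finset.range (N + 1), baileyKernel p q (a * q ^ 2) (k * q) N j *
            (q ^ (N - j) * (theta p (a * q ^ (j + 1)) * theta p (q ^ (j + 1)) * u (j + 1))) := by
  have hzero : theta p (a * q ^ (N + 1)) * theta p (q ^ (N + 1)) * baileyKernel p q a k (N + 1) 0
      = theta p (k * q ^ N) * theta p (k / a * q ^ N) * baileyKernel p q a k N 0 := by
    have hθa : theta p (a * q ^ (N + 1)) ≠ 0 := thetaPochN_ne_zero_iff.mp haN _ (by lia)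
    have hθq : theta p (q ^ (N + 1)) ≠ 0 := theta_pow_succ_ne_zero hqN (by lia)
    have h := baileyKernel_add_succ p q a k 0 N
    simp only [mul_zero, zero_add] at h
    rw [h]
    field_simp
  have hmid : ∑ j ∈ Finset.range N, theta p (a * q ^ (N + 1)) * theta p (q ^ (N + 1)) *
        (baileyKernel p q a k (N + 1) (j + 1) * u (j + 1))
      = ∑ j ∈ Finset.range N, (theta p (k * q ^ N) * theta p (k / a * q ^ N) *
            (baileyKernel p q a k N (j + 1) * u (j + 1))
          + theta p (k * q ^ (2 * N + 1)) * (theta p k / (theta p a * theta p (a * q))) *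
            (baileyKernel p q (a * q ^ 2) (k * q) N j * (q ^ (N - j) *
              (theta p (a * q ^ (j + 1)) * theta p (q ^ (j + 1)) * u (j + 1))))) :=
    Finset.sum_congr rfl fun j hj ↦ by
      linear_combination
        u (j + 1) * baileyKernel_succ_succ hp hq ha hk (Finset.mem_range.mp hj) hqN haN
  rw [Finset.sum_range_succ, Finset.sum_range_succ', Finset.sum_range_succ' _ N,
    Finset.sum_range_succ _ N, Nat.sub_self, pow_zero, one_mul]
  rw [Finset.sum_add_distrib] at hmid
  simp only [← Finset.mul_sum] at hmid
  linear_combination hmid + u 0 * hzero + theta p (a * q ^ (N + 1)) * theta p (q ^ (N + 1)) *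
    u (N + 1) * baileyKernel_succ_self p q a k N

lemma mul_mul_pow_div_mul_pow (hq : q ≠ 0) (a : ℂ) {x : ℂ} (hx : x ≠ 0) (m : ℕ) :
    q * (a * q ^ (2 * m)) / (x * q ^ m) = q * a / x * q ^ m := by
  field_simp
  ring

lemma wellPoisedRatio_add (hq : q ≠ 0) (p a : ℂ) {x : ℂ} (hx : x ≠ 0) (m n : ℕ) :
    wellPoisedRatio p q a x (m + n)
      = wellPoisedRatio p q a x m * wellPoisedRatio p q (a * q ^ (2 * m)) (x * q ^ m) n := by
  rw [wellPoisedRatio, wellPoisedRatio, wellPoisedRatio, mul_mul_pow_div_mul_pow hq a hx,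
    thetaPochN_add, thetaPochN_add, mul_div_mul_comm]

lemma wellPoisedRatio_succ (hq : q ≠ 0) (p a : ℂ) {x : ℂ} (hx : x ≠ 0) (j : ℕ) :
    wellPoisedRatio p q a x (j + 1)
      = theta p x / theta p (q * a / x) * wellPoisedRatio p q (a * q ^ 2) (x * q) j := by
  simpa [add_comm, wellPoisedRatio, thetaPochN] using wellPoisedRatio_add hq p a hx 1 j

lemma theta_mul_theta_mul_wellPoisedTerm_succ (hq : q ≠ 0) {b c d : ℂ} (hb : b ≠ 0) (hc : c ≠ 0)
    (hd : d ≠ 0) (z : ℂ) {j : ℕ} (hqj : thetaPochN p q q (j + 1) ≠ 0) :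
    theta p (a * q ^ (j + 1)) * theta p (q ^ (j + 1)) * wellPoisedTerm p q a b c d z (j + 1)
      = theta p a * theta p (a * q) * (theta p b / theta p (q * a / b)) *
          (theta p c / theta p (q * a / c)) * (theta p d / theta p (q * a / d)) * z *
        wellPoisedTerm p q (a * q ^ 2) (b * q) (c * q) (d * q) z j := by
  have hfactor : theta p (a * q ^ (j + 1)) * theta p (q ^ (j + 1)) *
        (thetaPochN p q a (j + 1) / thetaPochN p q q (j + 1))
      = theta p a * theta p (a * q) * (thetaPochN p q (a * q ^ 2) j / thetaPochN p q q j) := by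
    have ha : thetaPochN p q a (j + 1) * theta p (a * q ^ (j + 1))
        = theta p a * theta p (a * q) * thetaPochN p q (a * q ^ 2) j := by
      rw [← thetaPochN_succ, thetaPochN_succ', thetaPochN_succ', mul_assoc, mul_assoc, ← pow_two]
    have hθq := theta_pow_succ_ne_zero hqj j.lt_succ_self
    rw [thetaPochN_succ p q q, ← pow_succ']
    field_simp
    linear_combination ha / thetaPochN p q q j
  have hvwp : a * q ^ (2 * (j + 1)) = a * q ^ 2 * q ^ (2 * j) := by ring
  rw [wellPoisedTerm, wellPoisedTerm, wellPoisedRatio_succ hq p a hb,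
    wellPoisedRatio_succ hq p a hc, wellPoisedRatio_succ hq p a hd, hvwp]
  linear_combination theta p (a * q ^ 2 * q ^ (2 * j)) *
    (theta p b / theta p (q * a / b) * wellPoisedRatio p q (a * q ^ 2) (b * q) j) *
    (theta p c / theta p (q * a / c) * wellPoisedRatio p q (a * q ^ 2) (c * q) j) *
    (theta p d / theta p (q * a / d) * wellPoisedRatio p q (a * q ^ 2) (d * q) j) *
    z ^ (j + 1) * hfactor

lemma pow_sub_mul_wellPoisedTerm (hq : q ≠ 0) (p a b c d z : ℂ) {N j : ℕ} (hj : j ≤ N) :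
    q ^ (N - j) * wellPoisedTerm p q a b c d z j
      = q ^ N * wellPoisedTerm p q a b c d (z / q) j := by
  have hz : q ^ (N - j) * z ^ j = q ^ N * (z / q) ^ j := by
    rw [div_pow, ← mul_div_assoc, eq_div_iff (by positivity), mul_right_comm, pow_sub_mul_pow _ hj]
  rw [wellPoisedTerm, wellPoisedTerm, mul_left_comm, hz, mul_left_comm]

lemma frenkelTuraevProd_succ (p q a k b c d : ℂ) (n : ℕ) :
    frenkelTuraevProd p q a k b c d (n + 1) = frenkelTuraevProd p q a k b c d n *
      (theta p (k * q ^ n) / theta p (q ^ (n + 1)) *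
        (theta p (k / a * b * q ^ n) / theta p (q * a / b * q ^ n)) *
        (theta p (k / a * c * q ^ n) / theta p (q * a / c * q ^ n)) *
        (theta p (k / a * d * q ^ n) / theta p (q * a / d * q ^ n))) := by
  simp only [frenkelTuraevProd, thetaPochN_succ, ← pow_succ', mul_div_mul_comm]
  ring

lemma frenkelTuraevProd_shift (hq : q ≠ 0) (p a k : ℂ) {b c d : ℂ} (hb : b ≠ 0) (hc : c ≠ 0)
    (hd : d ≠ 0) (n : ℕ) :
    theta p k / (theta p (q * a / b) * theta p (q * a / c) * theta p (q * a / d)) *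
        frenkelTuraevProd p q (a * q ^ 2) (k * q) (b * q) (c * q) (d * q) n
      = frenkelTuraevProd p q a k b c d n * (theta p (k * q ^ n) /
          (theta p (q * a / b * q ^ n) * theta p (q * a / c * q ^ n) *
            theta p (q * a / d * q ^ n))) := by
  have hnum (x : ℂ) : k * q / (a * q ^ 2) * (x * q) = k / a * x := by field_simp
  have hden {x : ℂ} (hx : x ≠ 0) :
      theta p (q * a / x) * thetaPochN p q (q * (a * q ^ 2) / (x * q)) n
        = thetaPochN p q (q * a / x) n * theta p (q * a / x * q ^ n) := by
    rw [← thetaPochN_succ, thetaPochN_succ']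
    congr 2
    field_simp
  have hk : theta p k * thetaPochN p q (k * q) n = thetaPochN p q k n * theta p (k * q ^ n) := by
    rw [← thetaPochN_succ, thetaPochN_succ']
  rw [frenkelTuraevProd, frenkelTuraevProd, hnum, hnum, hnum]
  simp only [div_mul_div_comm]
  congr 1
  · linear_combination thetaPochN p q (k / a * b) n * thetaPochN p q (k / a * c) n *
      thetaPochN p q (k / a * d) n * hk
  · linear_combination thetaPochN p q q n * congr($(hden hb) * $(hden hc) * $(hden hd))

lemma theta_addition_of_balanced (hp : ‖p‖ < 1) (hq : q ≠ 0) (ha : a ≠ 0) (hk : k ≠ 0)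
    {b c d : ℂ} (hb : b ≠ 0) (hc : c ≠ 0) (hd : d ≠ 0) (hbal : k * b * c * d = q * a ^ 2) (n : ℕ) :
    theta p (a * q ^ (n + 1)) * (theta p (k / a * b * q ^ n) * theta p (k / a * c * q ^ n) *
        theta p (k / a * d * q ^ n))
      = theta p (k / a * q ^ n) * (theta p (q * a / b * q ^ n) * theta p (q * a / c * q ^ n) *
          theta p (q * a / d * q ^ n))
        + k / a * q ^ n * (theta p b * theta p c * theta p d) * theta p (k * q ^ (2 * n + 1)) := by
  have hadd := theta_addition hp hb hc hd (e := k / a * q ^ n) (by positivity)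
  have hcomm (x : ℂ) : x * (k / a * q ^ n) = k / a * x * q ^ n := by ring
  have hbcd : b * c * d * (k / a * q ^ n) = a * q ^ (n + 1) := by
    field_simp
    linear_combination q ^ n * hbal
  have hbc : b * c * (k / a * q ^ n) = q * a / d * q ^ n := by
    field_simp
    linear_combination hbal
  have hbd : b * d * (k / a * q ^ n) = q * a / c * q ^ n := by
    field_simp
    linear_combination hbal
  have hcd : c * d * (k / a * q ^ n) = q * a / b * q ^ n := by
    field_simp
    linear_combination hbal
  have hlast : b * c * d * (k / a * q ^ n) ^ 2 = k * q ^ (2 * n + 1) := by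
    field_simp
    linear_combination q ^ (2 * n) * hbal
  rw [hlast, hbcd, hbc, hbd, hcd, hcomm b, hcomm c, hcomm d] at hadd
  linear_combination hadd

lemma theta_mul_theta_mul_frenkelTuraevProd_succ (hp : ‖p‖ < 1) (hq : q ≠ 0) (ha : a ≠ 0)
    (hk : k ≠ 0) {b c d : ℂ} (hb : b ≠ 0) (hc : c ≠ 0) (hd : d ≠ 0)
    (hbal : k * b * c * d = q * a ^ 2) {n : ℕ} (hqn : theta p (q ^ (n + 1)) ≠ 0)
    (hbn : theta p (q * a / b * q ^ n) ≠ 0) (hcn : theta p (q * a / c * q ^ n) ≠ 0)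
    (hdn : theta p (q * a / d * q ^ n) ≠ 0) :
    theta p (a * q ^ (n + 1)) * theta p (q ^ (n + 1)) * frenkelTuraevProd p q a k b c d (n + 1)
      = theta p (k * q ^ n) * theta p (k / a * q ^ n) * frenkelTuraevProd p q a k b c d n
        + theta p (k * q ^ (2 * n + 1)) * (k / a * q ^ n) * (theta p b * theta p c * theta p d) *
          (theta p k / (theta p (q * a / b) * theta p (q * a / c) * theta p (q * a / d)) *
            frenkelTuraevProd p q (a * q ^ 2) (k * q) (b * q) (c * q) (d * q) n) := by
  have hadd := theta_addition_of_balanced hp hq ha hk hb hc hd hbal n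
  rw [frenkelTuraevProd_shift hq p a k hb hc hd, frenkelTuraevProd_succ]
  generalize theta p (q * a / b * q ^ n) = B, theta p (q * a / c * q ^ n) = C,
    theta p (q * a / d * q ^ n) = D, theta p (k / a * b * q ^ n) = X,
    theta p (k / a * c * q ^ n) = Y, theta p (k / a * d * q ^ n) = Z, k / a * q ^ n = e at *
  field_simp
  linear_combination frenkelTuraevProd p q a k b c d n * theta p (k * q ^ n) * hadd

lemma sum_baileyKernel_mul_wellPoisedTerm_succ (hq : q ≠ 0) {b c d : ℂ} (hb : b ≠ 0) (hc : c ≠ 0)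
    (hd : d ≠ 0) {N : ℕ} (hqN : thetaPochN p q q (N + 1) ≠ 0) :
    ∑ j ∈ Finset.range (N + 1), baileyKernel p q (a * q ^ 2) (k * q) N j *
        (q ^ (N - j) * (theta p (a * q ^ (j + 1)) * theta p (q ^ (j + 1)) *
          wellPoisedTerm p q a b c d (k / a) (j + 1)))
      = theta p a * theta p (a * q) * (theta p b / theta p (q * a / b)) *
          (theta p c / theta p (q * a / c)) * (theta p d / theta p (q * a / d)) * (k / a * q ^ N) *
        ∑ j ∈ Finset.range (N + 1), baileyKernel p q (a * q ^ 2) (k * q) N j *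
          wellPoisedTerm p q (a * q ^ 2) (b * q) (c * q) (d * q) (k * q / (a * q ^ 2)) j := by
  rw [Finset.mul_sum]
  refine Finset.sum_congr rfl fun j hj ↦ ?_
  have hjN : j ≤ N := Finset.mem_range_succ_iff.mp hj
  rw [theta_mul_theta_mul_wellPoisedTerm_succ hq hb hc hd _
    (thetaPochN_ne_zero_of_le hqN (by lia)), mul_left_comm (q ^ (N - j)),
    pow_sub_mul_wellPoisedTerm hq _ _ _ _ _ _ hjN,
    show k * q / (a * q ^ 2) = k / a / q by field_simp]
  ring

theorem frenkel_turaev_sum (hp : ‖p‖ < 1) (hq : q ≠ 0) {N : ℕ} {a k b c d : ℂ}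
    (ha : a ≠ 0) (hk : k ≠ 0) (hb : b ≠ 0) (hc : c ≠ 0) (hd : d ≠ 0)
    (hbal : k * b * c * d = q * a ^ 2) (hqN : thetaPochN p q q N ≠ 0)
    (haN : thetaPochN p q a (2 * N + 1) ≠ 0) (hbN : thetaPochN p q (q * a / b) N ≠ 0)
    (hcN : thetaPochN p q (q * a / c) N ≠ 0) (hdN : thetaPochN p q (q * a / d) N ≠ 0) :
    ∑ j ∈ Finset.range (N + 1), baileyKernel p q a k N j * wellPoisedTerm p q a b c d (k / a) j
      = frenkelTuraevProd p q a k b c d N := by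
  induction N generalizing a k b c d with
  | zero =>
    have hθa : theta p a ≠ 0 := by simpa using thetaPochN_ne_zero_iff.mp haN 0 (by lia)
    simp [baileyKernel_self, wellPoisedTerm, wellPoisedRatio, frenkelTuraevProd, thetaPochN, hθa]
  | succ N ih =>
    have hθa : theta p a ≠ 0 := by simpa using thetaPochN_ne_zero_iff.mp haN 0 (by lia)
    have hθaq : theta p (a * q) ≠ 0 := by simpa using thetaPochN_ne_zero_iff.mp haN 1 (by lia)
    have hθaN : theta p (a * q ^ (N + 1)) ≠ 0 := thetaPochN_ne_zero_iff.mp haN _ (by lia)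
    have hθqN : theta p (q ^ (N + 1)) ≠ 0 := theta_pow_succ_ne_zero hqN (by lia)
    have hshift {x : ℂ} (hx : x ≠ 0) (h : thetaPochN p q (q * a / x) (N + 1) ≠ 0) :
        thetaPochN p q (q * (a * q ^ 2) / (x * q)) N ≠ 0 := by
      have harg := mul_mul_pow_div_mul_pow hq a hx 1
      rw [mul_one, pow_one] at harg
      rw [harg, thetaPochN_succ'] at *
      exact right_ne_zero_of_mul h
    have hsum := ih ha hk hb hc hd hbal (thetaPochN_ne_zero_of_le hqN (by lia))
      (thetaPochN_ne_zero_of_le haN (by lia)) (thetaPochN_ne_zero_of_le hbN (by lia))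
      (thetaPochN_ne_zero_of_le hcN (by lia)) (thetaPochN_ne_zero_of_le hdN (by lia))
    have hsum' := ih (a := a * q ^ 2) (k := k * q) (b := b * q) (c := c * q) (d := d * q)
      (by positivity) (by positivity) (by positivity) (by positivity) (by positivity)
      (by linear_combination q ^ 4 * hbal) (thetaPochN_ne_zero_of_le hqN (by lia))
      (thetaPochN_mul_pow_ne_zero haN (by lia)) (hshift hb hbN) (hshift hc hcN) (hshift hd hdN)
    refine mul_left_cancel₀ (mul_ne_zero hθaN hθqN) ?_
    rw [sum_baileyKernel_succ_mul hp hq ha hk hqN haN, hsum,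
      sum_baileyKernel_mul_wellPoisedTerm_succ hq hb hc hd hqN, hsum',
      theta_mul_theta_mul_frenkelTuraevProd_succ hp hq ha hk hb hc hd hbal hθqN
        (thetaPochN_ne_zero_iff.mp hbN N N.lt_succ_self)
        (thetaPochN_ne_zero_iff.mp hcN N N.lt_succ_self)
        (thetaPochN_ne_zero_iff.mp hdN N N.lt_succ_self)]
    field_simp

end FrenkelTuraev

section BaileyMatrix

variable {p q t a k b c : ℂ}

lemma Mmat_eq_baileyKernel_mul (p q a k : ℂ) (N m : ℕ) :
    Mmat p q a k N m
      = baileyKernel p q a k N m * theta p (a * q ^ (2 * m)) * a ^ (N - m) := by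
  rw [Mmat, baileyKernel, thetaPochN_succ' p q a, mul_comm a q]
  ring

lemma Dmat_eq_wellPoisedRatio_mul (p q a b c : ℂ) (m : ℕ) :
    Dmat p q a b c m
      = wellPoisedRatio p q a b m * wellPoisedRatio p q a c m * (q * a / (b * c)) ^ m := by
  rw [Dmat, mul_div_mul_comm, wellPoisedRatio, wellPoisedRatio]

lemma baileyKernel_add_add (hq : q ≠ 0) (p a k : ℂ) (N n m : ℕ) :
    baileyKernel p q a k (m + N) (m + n) = thetaPochN p q k (2 * m) / thetaPochN p q a (2 * m) *
      baileyKernel p q (a * q ^ (2 * m)) (k * q ^ (2 * m)) N n := by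
  rw [baileyKernel, baileyKernel, mul_div_mul_right _ _ (by positivity),
    show m + N + (m + n) = 2 * m + (N + n) by ring, add_assoc (2 * m), thetaPochN_add p q k,
    thetaPochN_add p q a, Nat.add_sub_add_left]
  ring

lemma Mmat_add_add_mul_pow (hq : q ≠ 0) (p a k : ℂ) (N n m : ℕ) :
    Mmat p q a k (m + N) (m + n) * (q ^ (2 * m)) ^ (N - n)
      = thetaPochN p q k (2 * m) / thetaPochN p q a (2 * m) *
        Mmat p q (a * q ^ (2 * m)) (k * q ^ (2 * m)) N n := by
  rw [Mmat_eq_baileyKernel_mul, Mmat_eq_baileyKernel_mul, baileyKernel_add_add hq,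
    Nat.add_sub_add_left, show a * q ^ (2 * (m + n)) = a * q ^ (2 * m) * q ^ (2 * n) by ring,
    mul_pow a]
  ring

lemma Dmat_add (hq : q ≠ 0) (p a : ℂ) (hb : b ≠ 0) (hc : c ≠ 0) (m n : ℕ) :
    Dmat p q a b c (m + n)
      = Dmat p q a b c m * Dmat p q (a * q ^ (2 * m)) (b * q ^ m) (c * q ^ m) n := by
  have hz : q * (a * q ^ (2 * m)) / (b * q ^ m * (c * q ^ m)) = q * a / (b * c) := by
    field_simp
    ring
  rw [Dmat_eq_wellPoisedRatio_mul, Dmat_eq_wellPoisedRatio_mul, Dmat_eq_wellPoisedRatio_mul, hz,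
    wellPoisedRatio_add hq p a hb, wellPoisedRatio_add hq p a hc, pow_add]
  ring

lemma Dmat_of_balanced (hq : q ≠ 0) (ht : t ≠ 0) (hb : b ≠ 0) (hc : c ≠ 0)
    (hbal : k * b * c = q * a * t) (m : ℕ) :
    Dmat p q k (q * t / c) (q * t / b) m
      = thetaPochN p q (q * t / c) m * thetaPochN p q (q * t / b) m /
        (thetaPochN p q (q * a / b) m * thetaPochN p q (q * a / c) m) * (a / t) ^ m := by
  have hkb : q * k / (q * t / c) = q * a / b := by
    field_simp
    linear_combination hbal
  have hkc : q * k / (q * t / b) = q * a / c := by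
    field_simp
    linear_combination hbal
  have hz : q * k / (q * t / c * (q * t / b)) = a / t := by
    field_simp
    linear_combination hbal
  rw [Dmat, hkb, hkc, hz]

lemma Dmat_mul_Dmat (hq : q ≠ 0) (ht : t ≠ 0) (hb : b ≠ 0) (hc : c ≠ 0)
    (hbal : k * b * c = q * a * t) {m : ℕ} (hbm : thetaPochN p q (q * t / b) m ≠ 0)
    (hcm : thetaPochN p q (q * t / c) m ≠ 0) :
    Dmat p q k (q * t / c) (q * t / b) m * Dmat p q t b c m = Dmat p q a b c m := by
  have hz : a / t * (q * t / (b * c)) = q * a / (b * c) := by field_simp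
  rw [Dmat_of_balanced hq ht hb hc hbal, Dmat, Dmat, ← hz, mul_pow]
  field_simp

lemma Mmat_zero_right (ha : theta p a ≠ 0) (q k : ℂ) (N : ℕ) :
    Mmat p q a k N 0 = thetaPochN p q k N * thetaPochN p q (k / a) N /
      (thetaPochN p q (q * a) N * thetaPochN p q q N) * a ^ N := by
  rw [Mmat, mul_zero, pow_zero, mul_one, div_self ha, mul_one, add_zero, Nat.sub_zero]

lemma Mmat_mul_Dmat_mul_Mmat_zero (ht : t ≠ 0) (ha : a ≠ 0) (hb : b ≠ 0) (hc : c ≠ 0)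
    (hbal : k * b * c = q * a * t) (hθt : theta p t ≠ 0) {N n : ℕ} (hn : n ≤ N) :
    Mmat p q a k N n * Dmat p q a b c n * Mmat p q t a n 0
      = a ^ N * (baileyKernel p q a k N n * wellPoisedTerm p q a b c (a / t) (k / a) n) := by
  have hz : a ^ (N - n) * (q * a / (b * c)) ^ n * t ^ n = a ^ N * (k / a) ^ n := by
    rw [mul_assoc, ← mul_pow, ← pow_sub_mul_pow a hn, mul_assoc, ← mul_pow]
    congr 2
    field_simp
    linear_combination -hbal
  have hd : wellPoisedRatio p q a (a / t) n
      = thetaPochN p q (a / t) n / thetaPochN p q (q * t) n := by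
    rw [wellPoisedRatio, show q * a / (a / t) = q * t by field_simp]
  rw [Mmat_eq_baileyKernel_mul, Dmat_eq_wellPoisedRatio_mul, Mmat_zero_right hθt,
    wellPoisedTerm, hd]
  linear_combination baileyKernel p q a k N n * theta p (a * q ^ (2 * n)) *
    (thetaPochN p q a n / thetaPochN p q q n) * wellPoisedRatio p q a b n *
    wellPoisedRatio p q a c n * (thetaPochN p q (a / t) n / thetaPochN p q (q * t) n) * hz

lemma sum_Mmat_mul_Dmat_mul_Mmat_zero (hp : ‖p‖ < 1) (hq : q ≠ 0) (ht : t ≠ 0) (ha : a ≠ 0)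
    (hk : k ≠ 0) (hb : b ≠ 0) (hc : c ≠ 0) (hbal : k * b * c = q * a * t) {N : ℕ}
    (hqN : thetaPochN p q q N ≠ 0) (haN : thetaPochN p q a (2 * N + 1) ≠ 0)
    (htN : thetaPochN p q t (N + 1) ≠ 0) (hbN : thetaPochN p q (q * a / b) N ≠ 0)
    (hcN : thetaPochN p q (q * a / c) N ≠ 0) :
    ∑ n ∈ Finset.range (N + 1), Mmat p q a k N n * Dmat p q a b c n * Mmat p q t a n 0
      = Dmat p q k (q * t / c) (q * t / b) N * Mmat p q t k N 0 := by
  have hd : q * a / (a / t) = q * t := by field_simp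
  have hkb : k / a * b = q * t / c := by
    field_simp
    linear_combination hbal
  have hkc : k / a * c = q * t / b := by
    field_simp
    linear_combination hbal
  rw [thetaPochN_succ', mul_comm t q] at htN
  have hθt := left_ne_zero_of_mul htN
  have hFT := frenkel_turaev_sum hp hq ha hk hb hc (d := a / t) (by positivity)
    (by field_simp; linear_combination hbal) hqN haN hbN hcN (hd ▸ right_ne_zero_of_mul htN)
  rw [Finset.sum_congr rfl fun n hn ↦ Mmat_mul_Dmat_mul_Mmat_zero ht ha hb hc hbal hθt
    (Finset.mem_range_succ_iff.mp hn), ← Finset.mul_sum, hFT, frenkelTuraevProd, hd, hkb, hkc,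
    div_mul_div_cancel₀ ha, Mmat_zero_right hθt, Dmat_of_balanced hq ht hb hc hbal, div_pow]
  field_simp

lemma Mmat_mul_Dmat_mul_Mmat_add_mul_pow (hq : q ≠ 0) (p t a k : ℂ) (hb : b ≠ 0) (hc : c ≠ 0)
    {N n m : ℕ} (hn : n ≤ N) (ham : thetaPochN p q a (2 * m) ≠ 0) :
    Mmat p q a k (m + N) (m + n) * Dmat p q a b c (m + n) * Mmat p q t a (m + n) m *
        (q ^ (2 * m)) ^ N
      = thetaPochN p q k (2 * m) / thetaPochN p q t (2 * m) * Dmat p q a b c m *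
        (Mmat p q (a * q ^ (2 * m)) (k * q ^ (2 * m)) N n *
          Dmat p q (a * q ^ (2 * m)) (b * q ^ m) (c * q ^ m) n *
          Mmat p q (t * q ^ (2 * m)) (a * q ^ (2 * m)) n 0) := by
  have hak := Mmat_add_add_mul_pow hq p a k N n m
  have hta := Mmat_add_add_mul_pow hq p t a n 0 m
  rw [add_zero, Nat.sub_zero] at hta
  calc
    _ = Mmat p q a k (m + N) (m + n) * (q ^ (2 * m)) ^ (N - n) * Dmat p q a b c (m + n) *
          (Mmat p q t a (m + n) m * (q ^ (2 * m)) ^ n) := by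
      rw [← pow_sub_mul_pow (q ^ (2 * m)) hn]
      ring
    _ = _ := by
      rw [hak, hta, Dmat_add hq p a hb hc]
      field_simp

end BaileyMatrix

theorem matrix_bailey_lemma_general {p q t a k b c : ℂ} (hp : ‖p‖ < 1) (ht : t ≠ 0) (ha : a ≠ 0)
    (hk : k ≠ 0) (hb : b ≠ 0) (hc : c ≠ 0) (hbal : k * b * c = q * a * t) {N m : ℕ} (hm : m ≤ N)
    (hqN : thetaPochN p q q (N - m) ≠ 0) (haN : thetaPochN p q a (2 * N + 1) ≠ 0)
    (htN : thetaPochN p q t (N + m + 1) ≠ 0)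
    (habN : thetaPochN p q (q * a / b) N ≠ 0) (hacN : thetaPochN p q (q * a / c) N ≠ 0)
    (htbm : thetaPochN p q (q * t / b) m ≠ 0) (htcm : thetaPochN p q (q * t / c) m ≠ 0) :
    ∑ n ∈ Finset.Icc m N, Mmat p q a k N n * Dmat p q a b c n * Mmat p q t a n m
      = Dmat p q k (q * t / c) (q * t / b) N * Mmat p q t k N m * Dmat p q t b c m := by
  have hq : q ≠ 0 := by
    rintro rfl
    simp [hk, hb, hc] at hbal
  obtain ⟨L, rfl⟩ := Nat.exists_eq_add_of_le hm
  rw [Nat.add_sub_cancel_left] at hqN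
  have hshift {x : ℂ} (hx : x ≠ 0) (h : thetaPochN p q (q * a / x) (m + L) ≠ 0) :
      thetaPochN p q (q * (a * q ^ (2 * m)) / (x * q ^ m)) L ≠ 0 := by
    rw [mul_mul_pow_div_mul_pow hq a hx]
    exact thetaPochN_mul_pow_ne_zero h le_rfl
  have hzero := sum_Mmat_mul_Dmat_mul_Mmat_zero hp hq (t := t * q ^ (2 * m))
    (a := a * q ^ (2 * m)) (k := k * q ^ (2 * m)) (b := b * q ^ m) (c := c * q ^ m)
    (by positivity) (by positivity) (by positivity) (by positivity) (by positivity)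
    (by linear_combination q ^ (4 * m) * hbal) hqN (thetaPochN_mul_pow_ne_zero haN (by lia))
    (thetaPochN_mul_pow_ne_zero htN (by lia)) (hshift hb habN) (hshift hc hacN)
  have hM := Mmat_add_add_mul_pow hq p t k L 0 m
  have hD := Dmat_add hq p k (b := q * t / c) (c := q * t / b) (by positivity) (by positivity) m L
  rw [← mul_mul_pow_div_mul_pow hq t hc, ← mul_mul_pow_div_mul_pow hq t hb] at hD
  refine mul_right_cancel₀ (b := (q ^ (2 * m)) ^ L) (by positivity) ?_
  rw [← Finset.Ico_add_one_right_eq_Icc, Finset.sum_Ico_eq_sum_range,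
    show m + L + 1 - m = L + 1 by lia, Finset.sum_mul,
    Finset.sum_congr rfl fun n hn ↦ Mmat_mul_Dmat_mul_Mmat_add_mul_pow hq p t a k hb hc
      (Finset.mem_range_succ_iff.mp hn) (thetaPochN_ne_zero_of_le haN (by lia)),
    ← Finset.mul_sum, hzero, hD, ← Dmat_mul_Dmat hq ht hb hc hbal htbm htcm]
  linear_combination -Dmat p q k (q * t / c) (q * t / b) m * Dmat p q t b c m *
    Dmat p q (k * q ^ (2 * m)) (q * (t * q ^ (2 * m)) / (c * q ^ m))
      (q * (t * q ^ (2 * m)) / (b * q ^ m)) L * hM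

theorem matrix_bailey_lemma (p q t a k b c : ℂ) (hp : ‖p‖ < 1) (hq : ‖q‖ < 1)
    (ht : t ≠ 0) (ha : a ≠ 0) (hk : k ≠ 0) (hb : b ≠ 0) (hc : c ≠ 0)
    (hbal : k * b * c = q * a * t)
    (hgen : ∀ x ∈ ({a, t, q, q * a, q * t, q * a / b, q * a / c, q * t / b, q * t / c,
        q * k / (q * t / c), q * k / (q * t / b)} : Set ℂ), ∀ j : ℕ, theta p (x * q ^ j) ≠ 0)
    (N m : ℕ) (hm : m ≤ N) :
    ∑ n ∈ Finset.Icc m N, Mmat p q a k N n * Dmat p q a b c n * Mmat p q t a n m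
      = Dmat p q k (q * t / c) (q * t / b) N * Mmat p q t k N m * Dmat p q t b c m := by
  apply matrix_bailey_lemma_general hp ht ha hk hb hc hbal hm <;>
    exact thetaPochN_ne_zero_iff.mpr fun j _ ↦ hgen _ (by simp) j
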